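/- arXiv:1410.7501 — 11 statements merged into one kernel-verified Lean document; each statement's English description precedes it below -/
import Mathlib

section
/- There is no finite groupoid that is k-antiassociative for all k ≥ 3: for every finite groupoid G there exist k ≥ 3, two distinct ordered terms s and t on x₁,…,x_k, and elements a₁,…,a_k ∈ G with s(a₁,…,a_k) = t(a₁,…,a_k). -/
/-- Evaluation of a groupoid term in a groupoid `⟨G, op⟩` under the assignment `f`. -/
def evalWith {α G : Type*} (op : G → G → G) (f : α → G) : FreeMagma α → G
  | .of a => f a
  | .mul s t => op (evalWith op f s) (evalWith op f t)

/-- The list of variable occurrences of a term, from left to right. -/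
def varList {α : Type*} : FreeMagma α → List α
  | .of a => [a]
  | .mul s t => varList s ++ varList t

/-- An ordered term on `x₁, …, x_k`: each variable occurs exactly once, in order. -/
def IsOrderedTerm {k : ℕ} (t : FreeMagma (Fin k)) : Prop :=
  varList t = List.finRange k

/-!
Cutting `x₁, …, x_k` into two nonempty intervals at each of the `k - 1` possible places, and
bracketing the intervals arbitrarily, gives `k - 1` distinct ordered terms. Once `k - 1 > |G|`, any
assignment makes two of them take the same value, by the pigeonhole principle.
-/

theorem exists_varList_eq {α : Type*} {l : List α} (hl : l ≠ []) :
    ∃ t : FreeMagma α, varList t = l := by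
  induction l, hl using List.recNeNil with
  | singleton a => exact ⟨.of a, rfl⟩
  | cons a l _ ih =>
    obtain ⟨t, ht⟩ := ih
    exact ⟨.mul (.of a) t, congrArg (List.cons a) ht⟩

theorem exists_injective_varList_eq {α : Type*} {n : ℕ} {l : List α} (hn : n < l.length) :
    ∃ t : Fin n → FreeMagma α, Function.Injective t ∧ ∀ i, varList (t i) = l := by
  have take_ne_nil (i : Fin n) : l.take (i + 1) ≠ [] :=
    List.ne_nil_of_length_pos (by grind)
  have drop_ne_nil (i : Fin n) : l.drop (i + 1) ≠ [] :=
    List.ne_nil_of_length_pos (by grind)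
  choose left varList_left using fun i ↦ exists_varList_eq (take_ne_nil i)
  choose right varList_right using fun i ↦ exists_varList_eq (drop_ne_nil i)
  refine ⟨fun i ↦ .mul (left i) (right i), fun i j hij ↦ ?_, fun i ↦ ?_⟩
  · have left_eq : left i = left j := by injection hij
    have take_eq : l.take (i + 1) = l.take (j + 1) := by
      rw [← varList_left, ← varList_left, left_eq]
    grind [List.take_eq_take_iff]
  · rw [varList, varList_left, varList_right, List.take_append_drop]

theorem exists_ne_evalWith_eq {α G : Type*} [Finite G] (op : G → G → G) (f : α → G)
    {l : List α} (hl : Nat.card G + 1 < l.length) :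
    ∃ s t : FreeMagma α,
      varList s = l ∧ varList t = l ∧ s ≠ t ∧ evalWith op f s = evalWith op f t := by
  have := Fintype.ofFinite G
  obtain ⟨t, t_injective, varList_t⟩ := exists_injective_varList_eq hl
  obtain ⟨i, j, hij, heval⟩ :=
    Fintype.exists_ne_map_eq_of_card_lt (fun i ↦ evalWith op f (t i)) (by simp)
  exact ⟨t i, t j, varList_t i, varList_t j, t_injective.ne hij, heval⟩

/-- No finite (nonempty) groupoid is `k`-antiassociative for all `k ≥ 3`:
for every finite groupoid `⟨G, op⟩` there exist `k ≥ 3`, two distinct ordered terms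
`s` and `t` on `x₁, …, x_k`, and elements `a₁, …, a_k ∈ G` (an assignment `f`) with
`s(a₁,…,a_k) = t(a₁,…,a_k)`. -/
theorem no_finite_groupoid_always_antiassociative {G : Type*} [Finite G] [Nonempty G]
    (op : G → G → G) :
    ∃ k : ℕ, 3 ≤ k ∧ ∃ s t : FreeMagma (Fin k),
      IsOrderedTerm s ∧ IsOrderedTerm t ∧ s ≠ t ∧
      ∃ f : Fin k → G, evalWith op f s = evalWith op f t := by
  let f : Fin (Nat.card G + 2) → G := fun _ ↦ Classical.arbitrary G
  obtain ⟨s, t, hs, ht, hst, heval⟩ :=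
    exists_ne_evalWith_eq op f (l := List.finRange (Nat.card G + 2)) (by simp)
  have card_pos : 0 < Nat.card G := Nat.card_pos
  exact ⟨Nat.card G + 2, by lia, s, t, hs, ht, hst, f, heval⟩
end

section
/- Whenever 3 ≤ j < k, a groupoid ⟨G, ⋆⟩ that is k-antiassociative is also j-antiassociative. -/
/-- The groupoid `⟨G, op⟩` separates the terms `s` and `t`. -/
def Separates {α G : Type*} (op : G → G → G) (s t : FreeMagma α) : Prop :=
  ∀ f : α → G, evalWith op f s ≠ evalWith op f t

/-- The groupoid `⟨G, op⟩` is `k`-antiassociative. -/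
def KAntiassociative (k : ℕ) {G : Type*} (op : G → G → G) : Prop :=
  ∀ s t : FreeMagma (Fin k), IsOrderedTerm s → IsOrderedTerm t → s ≠ t → Separates op s t

section

variable {α β G : Type*} (op : G → G → G)

theorem varList_map (g : α → β) (t : FreeMagma α) :
    varList (FreeMagma.map g t) = (varList t).map g := by
  induction t with
  | ih1 a => rfl
  | ih2 s t ihs iht =>
    calc
      varList (FreeMagma.map g (s * t))
          = varList (FreeMagma.map g s) ++ varList (FreeMagma.map g t) := rfl
      _ = (varList s ++ varList t).map g := by rw [ihs, iht, List.map_append]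

theorem evalWith_map (g : α → β) (f : β → G) (t : FreeMagma α) :
    evalWith op f (FreeMagma.map g t) = evalWith op (f ∘ g) t := by
  induction t with
  | ih1 a => rfl
  | ih2 s t ihs iht => exact congrArg₂ op ihs iht

theorem freeMagma_mul_inj {s s' t t' : FreeMagma α} : s * s' = t * t' ↔ s = t ∧ s' = t' := by
  constructor
  · intro h
    injection h with h₁ h₂
    exact ⟨h₁, h₂⟩
  · rintro ⟨rfl, rfl⟩
    rfl

theorem freeMagma_map_injective {g : α → β} (hg : Function.Injective g) :
    Function.Injective (FreeMagma.map g) := by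
  intro s
  induction s with
  | ih1 a =>
    rintro (b | ⟨t, t'⟩) h
    · injection h with hab
      rw [hg hab]
    · cases h
  | ih2 s s' ihs ihs' =>
    rintro (b | ⟨t, t'⟩) h
    · cases h
    · obtain ⟨h₁, h₂⟩ := freeMagma_mul_inj.mp h
      exact freeMagma_mul_inj.mpr ⟨ihs h₁, ihs' h₂⟩

/-- The term `t ⋆ xₙ₊₁` on `n + 1` variables obtained from a term `t` on `n` variables; the first
`n` variables are embedded by `Fin.castSucc`, and `xₙ₊₁` is `Fin.last n`. -/
def mulLastVar {n : ℕ} (t : FreeMagma (Fin n)) : FreeMagma (Fin (n + 1)) :=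
  FreeMagma.map Fin.castSucc t * FreeMagma.of (Fin.last n)

theorem mulLastVar_injective (n : ℕ) : Function.Injective (mulLastVar (n := n)) := fun _ _ h =>
  freeMagma_map_injective (Fin.castSucc_injective n) (freeMagma_mul_inj.mp h).1

theorem IsOrderedTerm.mulLastVar {n : ℕ} {t : FreeMagma (Fin n)} (ht : IsOrderedTerm t) :
    IsOrderedTerm (mulLastVar t) :=
  calc
    varList (FreeMagma.map Fin.castSucc t) ++ [Fin.last n]
        = (varList t).map Fin.castSucc ++ [Fin.last n] := by rw [varList_map]
    _ = (List.finRange n).map Fin.castSucc ++ [Fin.last n] := by rw [ht]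
    _ = List.finRange (n + 1) := List.finRange_succ_last.symm

theorem evalWith_snoc_mulLastVar {n : ℕ} (f : Fin n → G) (a : G) (t : FreeMagma (Fin n)) :
    evalWith op (Fin.snoc (α := fun _ => G) f a) (mulLastVar t) = op (evalWith op f t) a :=
  congrArg₂ op
    (by rw [evalWith_map, Fin.snoc_comp_castSucc])
    (Fin.snoc_last (α := fun _ => G) a f)

variable {op}

theorem KAntiassociative.of_succ {n : ℕ} (h : KAntiassociative (n + 1) op) :
    KAntiassociative n op := by
  intro s t hs ht hst f heq
  -- The value given to `xₙ₊₁` is immaterial; any element of `G` would do.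
  refine h (mulLastVar s) (mulLastVar t) hs.mulLastVar ht.mulLastVar
    ((mulLastVar_injective n).ne hst) (Fin.snoc f (evalWith op f s)) ?_
  rw [evalWith_snoc_mulLastVar, evalWith_snoc_mulLastVar, heq]

theorem kAntiassociative_antitone : Antitone fun k => KAntiassociative k op :=
  antitone_nat_of_succ_le fun _ => KAntiassociative.of_succ

end

/-- Whenever `3 ≤ j < k`, a groupoid that is `k`-antiassociative is also
`j`-antiassociative. -/
theorem kAntiassociative_implies_jAntiassociative {G : Type*} (op : G → G → G)
    (j k : ℕ) (hj : 3 ≤ j) (hjk : j < k)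
    (hk : KAntiassociative k op) : KAntiassociative j op :=
  kAntiassociative_antitone hjk.le hk
end

section
/- Consider the groupoid ⟨Z₃, ⊙⟩ with operation x ⊙ y = (y + 1) mod 3. For every groupoid term t and every assignment of values in Z₃ to its variables, the value of t equals (z + n) mod 3, where z is the value assigned to the rightmost variable occurrence of t and n is the depth of that occurrence in t (the length of its path in the tree T(t)). -/
/-- The variable at the rightmost leaf of (the tree of) a term. -/
def rightVar {α : Type*} : FreeMagma α → α
  | .of a => a
  | .mul _ t => rightVar t

/-- The path (a string over `{l, r}`, here `false = l`, `true = r`, read from the root)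
of the rightmost variable occurrence of a term; it lies in `{r}*`, and its length is
the depth of that occurrence. -/
def rightPath {α : Type*} : FreeMagma α → List Bool
  | .of _ => []
  | .mul _ t => true :: rightPath t

theorem evalWith_eq_iterate {α G : Type*} (g : G → G) (f : α → G) (t : FreeMagma α) :
    evalWith (fun _ y => g y) f t = g^[(rightPath t).length] (f (rightVar t)) := by
  induction t using FreeMagma.rec with
  | of a => rfl
  | mul _ t _ ih =>
    calc g (evalWith (fun _ y => g y) f t)
      _ = g (g^[(rightPath t).length] (f (rightVar t))) := congrArg g ih
      _ = g^[(rightPath t).length + 1] (f (rightVar t)) := (Function.iterate_succ_apply' ..).symm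

theorem rightDeranged_value_general {α R : Type*} [AddMonoidWithOne R] (t : FreeMagma α)
    (f : α → R) :
    evalWith (fun _ y => y + 1) f t = f (rightVar t) + ((rightPath t).length : R) := by
  rw [evalWith_eq_iterate (· + 1), add_right_iterate_apply, nsmul_one]

/-- In the groupoid `⟨Z₃, ⊙⟩` with `x ⊙ y = (y + 1) mod 3`, the value of
any term `t` equals `(z + n) mod 3`, where `z` is the value assigned to the rightmost
variable occurrence of `t` and `n` is the depth of that occurrence in `t`. -/
theorem rightDeranged_value {α : Type*} (t : FreeMagma α) (f : α → ZMod 3) :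
    evalWith (fun _ y => y + 1) f t = f (rightVar t) + ((rightPath t).length : ZMod 3) :=
  rightDeranged_value_general t f
end

section
/- Let ⊙₂ be the operation on Z₂ given by x ⊙₂ y = (x + 1) mod 2, and let ⊙₃ be the operation on Z₃ given by x ⊙₃ y = (y + 1) mod 3. Then the product groupoid on Z₂ × Z₃, with componentwise operation (a,b) ⋆ (c,d) = (a ⊙₂ c, b ⊙₃ d) = ((a+1) mod 2, (d+1) mod 3), is 4-antiassociative: it separates every pair of distinct terms among the five 4-ary ordered terms ((x₁⋆x₂)⋆x₃)⋆x₄, (x₁⋆(x₂⋆x₃))⋆x₄, (x₁⋆x₂)⋆(x₃⋆x₄), x₁⋆((x₂⋆x₃)⋆x₄), and x₁⋆(x₂⋆(x₃⋆x₄)). -/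
/-! The first coordinate of the value of a term is that of its leftmost variable plus the depth of
this variable, since `⋆` increments the first coordinate of its left factor and ignores the right
one; dually for the second coordinate. Ordered terms have the same leftmost and the same rightmost
variable, so they are separated as soon as their pairs of left and right depths differ modulo 2
and 3 respectively, and the pairs of the five terms do. -/

/-- The first variable occurring in a term. -/
def leftmost {α : Type*} : FreeMagma α → α
  | .of a => a
  | .mul s _ => leftmost s

/-- The last variable occurring in a term. -/
def rightmost {α : Type*} : FreeMagma α → α
  | .of a => a
  | .mul _ t => rightmost t

/-- The depth of the first variable of a term, regarded as a binary tree. -/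
def leftDepth {α : Type*} : FreeMagma α → ℕ
  | .of _ => 0
  | .mul s _ => leftDepth s + 1

/-- The depth of the last variable of a term, regarded as a binary tree. -/
def rightDepth {α : Type*} : FreeMagma α → ℕ
  | .of _ => 0
  | .mul _ t => rightDepth t + 1

section ShiftMul

variable {α A B : Type*} [AddMonoidWithOne A] [AddMonoidWithOne B]

/-- The operation `(a, b) ⋆ (c, d) = (a + 1, d + 1)`, the product of the groupoids
`a ⋆ c = a + 1` and `b ⋆ d = d + 1`. -/
def shiftMul (p q : A × B) : A × B := (p.1 + 1, q.2 + 1)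

variable (A B) in
/-- The left and right depths of a term, read in `A` and `B`; for `ZMod m` and `ZMod n` these are
their residues. -/
def outerDepths (t : FreeMagma α) : A × B := (leftDepth t, rightDepth t)

theorem evalWith_shiftMul (f : α → A × B) (t : FreeMagma α) :
    evalWith shiftMul f t = ((f (leftmost t)).1, (f (rightmost t)).2) + outerDepths A B t := by
  induction t using FreeMagma.rec with
  | of a => simp [evalWith, leftmost, rightmost, outerDepths, leftDepth, rightDepth, Prod.ext_iff]
  | mul s t ihs iht =>
    simp [evalWith, shiftMul, leftmost, rightmost, outerDepths, leftDepth, rightDepth, ihs, iht,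
      add_assoc]

theorem separates_shiftMul_iff [IsLeftCancelAdd A] [IsLeftCancelAdd B] {s t : FreeMagma α}
    (hleft : leftmost s = leftmost t) (hright : rightmost s = rightmost t) :
    Separates (shiftMul : A × B → A × B → A × B) s t ↔ outerDepths A B s ≠ outerDepths A B t := by
  simp only [Separates, evalWith_shiftMul, hleft, hright, ne_eq, add_right_inj, forall_const]

end ShiftMul

/-- The product groupoid on `Z₂ × Z₃` of `x ⊙₂ y = (x+1) mod 2` and
`x ⊙₃ y = (y+1) mod 3`, i.e. `(a,b) ⋆ (c,d) = ((a+1) mod 2, (d+1) mod 3)`, is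
4-antiassociative: it separates every pair of distinct terms among the five
4-ary ordered terms. -/
theorem prod_Z2_Z3_four_antiassociative :
    let op : ZMod 2 × ZMod 3 → ZMod 2 × ZMod 3 → ZMod 2 × ZMod 3 :=
      fun p q => (p.1 + 1, q.2 + 1)
    let x : Fin 4 → FreeMagma (Fin 4) := FreeMagma.of
    let L : List (FreeMagma (Fin 4)) :=
      [((x 0 * x 1) * x 2) * x 3,
       (x 0 * (x 1 * x 2)) * x 3,
       (x 0 * x 1) * (x 2 * x 3),
       x 0 * ((x 1 * x 2) * x 3),
       x 0 * (x 1 * (x 2 * x 3))]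
    ∀ s ∈ L, ∀ t ∈ L, s ≠ t → Separates op s t := by
  intro op x L s hs t ht hne
  have leftmost_eq : ∀ u ∈ L, leftmost u = 0 := by decide +revert
  have rightmost_eq : ∀ u ∈ L, rightmost u = 3 := by decide +revert
  have map_outerDepths : L.map (outerDepths (ZMod 2) (ZMod 3)) =
      [(3, 1), (2, 1), (2, 2), (1, 2), (1, 3)] := rfl
  have nodup_outerDepths : (L.map (outerDepths (ZMod 2) (ZMod 3))).Nodup := by
    rw [map_outerDepths]
    decide
  have outerDepths_ne : outerDepths (ZMod 2) (ZMod 3) s ≠ outerDepths (ZMod 2) (ZMod 3) t :=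
    fun h => hne (List.inj_on_of_nodup_map nodup_outerDepths hs ht h)
  exact (separates_shiftMul_iff ((leftmost_eq s hs).trans (leftmost_eq t ht).symm)
    ((rightmost_eq s hs).trans (rightmost_eq t ht).symm)).mpr outerDepths_ne
end

section
/- Let A be the abelian group of 2×3 matrices over Z₂ (so |A| = 64). Let α be the endomorphism of A that copies the left column onto the middle column and the middle column onto the right column (α(M) has columns M₍·,1₎, M₍·,1₎, M₍·,2₎), let β be the endomorphism that copies the top row onto the bottom row (β(M) has both rows equal to the top row of M), and let c be the matrix with a 1 in the top-left entry and 0 elsewhere. Define x ⋆ y = α(x) + β(y) + c on A. Then the finite groupoid ⟨A, ⋆⟩ separates the 5-ary ordered terms s(v,w,x,y,z) = ((v ⋆ w) ⋆ (x ⋆ y)) ⋆ z and t(v,w,x,y,z) = ((v ⋆ (w ⋆ x)) ⋆ y) ⋆ z: for all v,w,x,y,z ∈ A, s(v,w,x,y,z) ≠ t(v,w,x,y,z). -/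
/-- The endomorphism `α` of the group of `2 × 3` matrices over `Z₂` that copies the
left column onto the middle column and the middle column onto the right column:
`α(M)` has columns `M₍·,0₎, M₍·,0₎, M₍·,1₎`. -/
def alphaEnd (M : Matrix (Fin 2) (Fin 3) (ZMod 2)) : Matrix (Fin 2) (Fin 3) (ZMod 2) :=
  Matrix.of fun i j => M i ⟨j.1 - 1, lt_of_le_of_lt (Nat.sub_le _ _) j.2⟩

/-- The endomorphism `β` that copies the top row onto the bottom row:
both rows of `β(M)` equal the top row of `M`. -/
def betaEnd (M : Matrix (Fin 2) (Fin 3) (ZMod 2)) : Matrix (Fin 2) (Fin 3) (ZMod 2) :=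
  Matrix.of fun _ j => M 0 j

/-- The matrix `c` with a `1` in the top-left entry and `0` elsewhere. -/
def cMat : Matrix (Fin 2) (Fin 3) (ZMod 2) :=
  Matrix.of fun i j => if i = 0 ∧ j = 0 then 1 else 0

/-- The affine endomorphism groupoid operation `x ⋆ y = α(x) + β(y) + c`. -/
def affOp (x y : Matrix (Fin 2) (Fin 3) (ZMod 2)) : Matrix (Fin 2) (Fin 3) (ZMod 2) :=
  alphaEnd x + betaEnd y + cMat

/-!
Write `s` and `t` for the two terms. When `α` and `β` commute and `β² = β`, expanding `s - t`
cancels every occurrence of `v`, `x`, `y` and `z` and leaves `αβ(1 - α)(αw + c)`. When moreover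
`α³ = α²`, the variable `w` is killed too, so `s - t` is the constant `αβc - α²βc`. For the matrices
at hand `αβc` has rows `(1, 1, 0)` while `α²βc` has rows `(1, 1, 1)`.
-/

section AffineEndomorphismGroupoid

variable {A : Type*} [AddCommGroup A]

/-- The operation of the affine endomorphism groupoid `E(A, α, β, c)`. -/
def affineEndOp (α β : AddMonoid.End A) (c x y : A) : A :=
  α x + β y + c

variable {α β : AddMonoid.End A} {c : A}

local infixl:70 "⋆" => affineEndOp α β c

theorem affineEndOp_sub_affineEndOp (hαβ : Commute α β) (hβ : IsIdempotentElem β)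
    (v w x y z : A) :
    ((v ⋆ w) ⋆ (x ⋆ y)) ⋆ z - ((v ⋆ (w ⋆ x)) ⋆ y) ⋆ z =
      α (β (α w + c)) - α (α (β (α w + c))) := by
  have beta_alpha (a : A) : β (α a) = α (β a) := (DFunLike.congr_fun hαβ.eq a).symm
  have beta_beta (a : A) : β (β a) = β a := DFunLike.congr_fun hβ.eq a
  simp only [affineEndOp, map_add, beta_alpha, beta_beta]
  abel

theorem affineEndOp_sub_affineEndOp_of_pow_three_eq (hαβ : Commute α β)
    (hβ : IsIdempotentElem β) (hα : α ^ 3 = α ^ 2) (v w x y z : A) :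
    ((v ⋆ w) ⋆ (x ⋆ y)) ⋆ z - ((v ⋆ (w ⋆ x)) ⋆ y) ⋆ z = α (β c) - α (α (β c)) := by
  have beta_alpha (a : A) : β (α a) = α (β a) := (DFunLike.congr_fun hαβ.eq a).symm
  have alpha_cubed (a : A) : α (α (α a)) = α (α a) := DFunLike.congr_fun hα a
  rw [affineEndOp_sub_affineEndOp hαβ hβ]
  simp only [map_add, beta_alpha, alpha_cubed, add_sub_add_left_eq_sub]

theorem affine_groupoid_separates_general (hαβ : Commute α β) (hβ : IsIdempotentElem β)
    (hα : α ^ 3 = α ^ 2) (hc : α (β c) ≠ α (α (β c))) (v w x y z : A) :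
    ((v ⋆ w) ⋆ (x ⋆ y)) ⋆ z ≠ ((v ⋆ (w ⋆ x)) ⋆ y) ⋆ z := by
  rw [← sub_ne_zero, affineEndOp_sub_affineEndOp_of_pow_three_eq hαβ hβ hα]
  exact sub_ne_zero.mpr hc

end AffineEndomorphismGroupoid

/-- `alphaEnd` as an element of the endomorphism ring of the group of matrices. -/
def alphaAddEnd : AddMonoid.End (Matrix (Fin 2) (Fin 3) (ZMod 2)) where
  toFun := alphaEnd
  map_zero' := rfl
  map_add' _ _ := rfl

/-- `betaEnd` as an element of the endomorphism ring of the group of matrices. -/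
def betaAddEnd : AddMonoid.End (Matrix (Fin 2) (Fin 3) (ZMod 2)) where
  toFun := betaEnd
  map_zero' := rfl
  map_add' _ _ := rfl

theorem commute_alphaAddEnd_betaAddEnd : Commute alphaAddEnd betaAddEnd :=
  rfl

theorem isIdempotentElem_betaAddEnd : IsIdempotentElem betaAddEnd :=
  rfl

theorem alphaAddEnd_pow_three : alphaAddEnd ^ 3 = alphaAddEnd ^ 2 := by
  ext M i j
  fin_cases j <;> rfl

theorem alphaEnd_betaEnd_cMat_ne :
    alphaEnd (betaEnd cMat) ≠ alphaEnd (alphaEnd (betaEnd cMat)) := fun h =>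
  have top_right : (0 : ZMod 2) = 1 := congrFun₂ h 0 2
  zero_ne_one top_right

/-- The (64-element) affine endomorphism groupoid `⟨A, ⋆⟩`, where `A` is
the abelian group of `2 × 3` matrices over `Z₂` and `x ⋆ y = α(x) + β(y) + c`,
separates the 5-ary ordered terms `s(v,w,x,y,z) = ((v ⋆ w) ⋆ (x ⋆ y)) ⋆ z` and
`t(v,w,x,y,z) = ((v ⋆ (w ⋆ x)) ⋆ y) ⋆ z`. -/
theorem affine_groupoid_separates :
    ∀ v w x y z : Matrix (Fin 2) (Fin 3) (ZMod 2),
      affOp (affOp (affOp v w) (affOp x y)) z ≠ affOp (affOp (affOp v (affOp w x)) y) z :=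
  affine_groupoid_separates_general commute_alphaAddEnd_betaAddEnd isIdempotentElem_betaAddEnd
    alphaAddEnd_pow_three alphaEnd_betaEnd_cMat_ne
end

section
/- Let p = p₀p₁⋯p_j be a nonempty string over {l,r}, let m, n be natural numbers, and fix fresh indices a, a+1, …, a+j−1 pairwise distinct and distinct from m and n. Let ⋆ be the groupoid operation ‖m,p,n‖ on finitely supported vectors over Z₂ (or more generally ⋆ = ‖m,p,n‖ + ⋆′, the pointwise sum mod 2, where ⋆′ is any operation whose output is always 0 in components n, a, a+1, …, a+j−1). Let s be any groupoid term such that p is the path to a node of T(s), and let s_p be the subterm of s rooted at that node. Then for all values of the variables of s, s[n] = s_p[m], where s[n] denotes the n-th component of the value of s computed with ⋆. -/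
/-- The subterm of `s` rooted at the node of `T(s)` with path `p` (a string over
`{l, r}`, here `false = l`, `true = r`, read from the root), if such a node exists. -/
def subtermAt {α : Type*} : FreeMagma α → List Bool → Option (FreeMagma α)
  | s, [] => some s
  | .of _, _ :: _ => none
  | .mul s t, b :: p => subtermAt (bif b then t else s) p

/-- `sel b x y` is `x` if `b = false` (i.e. the letter `l`) and `y` if `b = true`
(i.e. the letter `r`). -/
def sel {G : Type*} (b : Bool) (x y : G) : G := bif b then y else x

/-!
Write `p = p₀p₁⋯p_j`. Component `n` of a product `u ⋆ v` is component `a` of the factor selected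
by `p₀`; component `a` of that factor, again a product, is component `a + 1` of its factor selected
by `p₁`; and so on. Descending in `T(s)` along `p` therefore moves the component along
`n, a, …, a + j - 1, m`, one entry per letter of `p`.
-/

section

variable {α G R : Type*}

theorem evalWith_sel (op : G → G → G) (f : α → G) (b : Bool) (s t : FreeMagma α) :
    evalWith op f (sel b s t) = sel b (evalWith op f s) (evalWith op f t) := by
  cases b <;> rfl

theorem subtermAt_nil (s : FreeMagma α) : subtermAt s [] = some s := by
  cases s <;> rfl

theorem exists_eq_mul_of_subtermAt_cons {s t : FreeMagma α} {b : Bool} {p : List Bool}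
    (h : subtermAt s (b :: p) = some t) :
    ∃ u v, s = .mul u v ∧ subtermAt (sel b u v) p = some t := by
  cases s with
  | of x => simp [subtermAt] at h
  | mul u v => exact ⟨u, v, rfl, h⟩

theorem exists_apply_evalWith_eq_of_subtermAt_cons {op : G → G → G} {π π' : G → R} {b : Bool}
    (hπ : ∀ x y, π (op x y) = π' (sel b x y)) (f : α → G) {s t : FreeMagma α} {p : List Bool}
    (h : subtermAt s (b :: p) = some t) :
    ∃ s', subtermAt s' p = some t ∧ π (evalWith op f s) = π' (evalWith op f s') := by
  obtain ⟨u, v, rfl, huv⟩ := exists_eq_mul_of_subtermAt_cons h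
  refine ⟨sel b u v, huv, ?_⟩
  rw [evalWith_sel]
  exact hπ _ _

/-- Arbitrary functions `πm`, `πn`, `πa i` on the groupoid take the place of the components
`m`, `n`, `a + i`. -/
theorem path_lemma_general (p : List Bool) (hp : p ≠ []) (πm πn : G → R) (πa : ℕ → G → R)
    (op : G → G → G)
    (hn0 : p.length = 1 → ∀ x y, πn (op x y) = πm (sel (p.getD 0 false) x y))
    (hn1 : 2 ≤ p.length → ∀ x y, πn (op x y) = πa 0 (sel (p.getD 0 false) x y))
    (hmid : ∀ i, i + 2 < p.length → ∀ x y,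
      πa i (op x y) = πa (i + 1) (sel (p.getD (i + 1) false) x y))
    (hlast : ∀ i, i + 2 = p.length → ∀ x y,
      πa i (op x y) = πm (sel (p.getD (i + 1) false) x y))
    (s sp : FreeMagma α) (hsp : subtermAt s p = some sp) (f : α → G) :
    πn (evalWith op f s) = πm (evalWith op f sp) := by
  induction p generalizing πn πa s with
  | nil => exact absurd rfl hp
  | cons b q ih =>
    cases q with
    | nil =>
      obtain ⟨s', hs', hval⟩ := exists_apply_evalWith_eq_of_subtermAt_cons (hn0 rfl) f hsp
      obtain rfl : s' = sp := by simpa only [subtermAt_nil, Option.some.injEq] using hs'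
      exact hval
    | cons c q =>
      obtain ⟨s', hs', hval⟩ := exists_apply_evalWith_eq_of_subtermAt_cons (hn1 (by simp)) f hsp
      rw [hval]
      refine ih (List.cons_ne_nil c q) (πa 0) (fun i => πa (i + 1)) ?_ ?_ ?_ ?_ s' hs'
      · exact fun h => hlast 0 (congrArg (· + 1) h.symm)
      · exact fun h => hmid 0 (Nat.succ_lt_succ h)
      · exact fun i h => hmid (i + 1) (Nat.succ_lt_succ h)
      · exact fun i h => hlast (i + 1) (congrArg (· + 1) h)

end

/-- Let `p = p₀p₁⋯p_j` be a nonempty string over `{l, r}`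
(`false = l`, `true = r`), let `m n` be naturals, and let the fresh indices
`a, a+1, …, a+j-1` be distinct from `m` and `n`.  Let `⋆` be any operation on finitely
supported vectors over `Z₂` agreeing with `‖m,p,n‖` on components `n, a, …, a+j-1`
(e.g. `‖m,p,n‖` itself, or `‖m,p,n‖ + ⋆′` with `⋆′` vanishing on those components):
writing `z = x ⋆ y`, if `j = 0` then `z[n] = (x or y)[m]` according as `p₀ = l` or `r`;
if `j ≥ 1` then `z[n] = (x or y)[a]` according to `p₀`, `z[a+i] = (x or y)[a+i+1]`
according to `p_{i+1}` for `0 ≤ i ≤ j-2`, and `z[a+j-1] = (x or y)[m]` according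
to `p_j`.  If `s` is any groupoid term such that `p` is the path to a node of `T(s)`,
with subterm `s_p` rooted there, then `s[n] = s_p[m]` for all values of the variables. -/
theorem path_lemma (p : List Bool) (hp : p ≠ []) (m n a : ℕ)
    (hdist : ∀ i < p.length - 1, a + i ≠ m ∧ a + i ≠ n)
    (star : (ℕ →₀ ZMod 2) → (ℕ →₀ ZMod 2) → (ℕ →₀ ZMod 2))
    (hn0 : p.length = 1 → ∀ x y, star x y n = sel (p.getD 0 false) x y m)
    (hn1 : 2 ≤ p.length → ∀ x y, star x y n = sel (p.getD 0 false) x y a)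
    (hmid : ∀ i, i + 2 ≤ p.length - 1 → ∀ x y,
      star x y (a + i) = sel (p.getD (i + 1) false) x y (a + i + 1))
    (hlast : 2 ≤ p.length → ∀ x y,
      star x y (a + (p.length - 2)) = sel (p.getD (p.length - 1) false) x y m)
    {α : Type*} (s sp : FreeMagma α) (hsp : subtermAt s p = some sp)
    (f : α → (ℕ →₀ ZMod 2)) :
    evalWith star f s n = evalWith star f sp m :=
  path_lemma_general p hp (· m) (· n) (fun i x => x (a + i)) star hn0 hn1
    (fun i hi => hmid i (by omega)) (fun i hi => by simpa [← hi] using hlast (by omega)) s sp hsp f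
end

section
/- Let p = p₀p₁⋯p_j be a nonempty string over {l,r}, let m, n be natural numbers, and fix fresh indices a, a+1, …, a+j−1 pairwise distinct and distinct from m and n. Let ⋆ be the tweaked groupoid operation ‖m,p,n‖′ on finitely supported vectors over Z₂ (or more generally ⋆ = ‖m,p,n‖′ + ⋆′, the pointwise sum mod 2, where ⋆′ is any operation whose output is always 0 in components n, a, a+1, …, a+j−1). Let s be any groupoid term such that p is the path to a node of T(s), and let t = s_p be the subterm of s rooted at that node. Then for all values of the variables of s, s[n] = (t[m] + 1) mod 2. -/
/-!
The value `s[n]` can be traced along the path `p` one letter at a time: it is the tweak of the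
component `a` of the child of `s` on the path, which is the component `a + 1` of the next subterm,
and so on until the component `m` of `s_p` is reached. Apply the tweak to every component after the
first in this chain: then a component of a product is always the next component of the factor that
the current letter picks, with no exception at the root, and a single induction on the path suffices.
-/

theorem apply_sel {G H : Type*} (φ : G → H) (b : Bool) (x y : G) :
    φ (sel b x y) = sel b (φ x) (φ y) :=
  Bool.apply_cond φ

theorem evalWith_apply_of_subtermAt {α G R : Type*} {op : G → G → G} (f : α → G) {p : List Bool}
    {c : ℕ → G → R} (hc : ∀ i (hi : i < p.length) x y, c i (op x y) = c (i + 1) (sel p[i] x y))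
    {s t : FreeMagma α} (hst : subtermAt s p = some t) :
    c 0 (evalWith op f s) = c p.length (evalWith op f t) := by
  induction p generalizing c s with
  | nil =>
    obtain rfl : s = t := by simpa only [subtermAt, Option.some.injEq] using hst
    rfl
  | cons b p ih =>
    cases s with
    | of v => simp [subtermAt] at hst
    | mul l r =>
      have hc_tail : ∀ i (hi : i < p.length) x y,
          c (i + 1) (op x y) = c (i + 1 + 1) (sel p[i] x y) :=
        fun i hi => hc (i + 1) (Nat.succ_lt_succ hi)
      calc c 0 (op (evalWith op f l) (evalWith op f r))
          = c 1 (sel b (evalWith op f l) (evalWith op f r)) := hc 0 (Nat.succ_pos _) _ _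
        _ = c 1 (evalWith op f (sel b l r)) := by rw [apply_sel (evalWith op f)]
        _ = c (p.length + 1) (evalWith op f t) := ih (c := fun i => c (i + 1)) hc_tail hst

section TweakedOperation

variable {V R : Type*} [FunLike V ℕ R]

/-- The quantity that the operation `‖m,p,n‖′` carries up a path of length `j + 1`, as read off the
value `x` of the subterm at depth `i`: the component `n` at the root, and the tweak `τ` of the
component `a + i - 1` (of `m`, from depth `j + 1` on) below it. -/
def carriedValue (τ : R → R) (m n a j : ℕ) : ℕ → V → R
  | 0, x => x n
  | i + 1, x => τ (if i < j then x (a + i) else x m)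

theorem carriedValue_star (τ : R → R) (m n a : ℕ) {b : Bool} {q : List Bool} {star : V → V → V}
    (hn0 : q.length = 0 → ∀ x y, star x y n = τ (sel b x y m))
    (hn1 : 1 ≤ q.length → ∀ x y, star x y n = τ (sel b x y a))
    (hmid : ∀ i (hi : i + 1 < q.length), ∀ x y, star x y (a + i) = sel q[i] x y (a + i + 1))
    (hlast : ∀ i (hi : i + 1 = q.length), ∀ x y, star x y (a + i) = sel q[i] x y m)
    (i : ℕ) (hi : i < (b :: q).length) (x y : V) :
    carriedValue τ m n a q.length i (star x y) =
      carriedValue τ m n a q.length (i + 1) (sel (b :: q)[i] x y) := by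
  cases i with
  | zero =>
    rcases Nat.eq_zero_or_pos q.length with hq | hq
    · simpa [carriedValue, hq] using hn0 hq x y
    · simpa [carriedValue, hq] using hn1 hq x y
  | succ i =>
    have hiq : i < q.length := Nat.lt_of_succ_lt_succ hi
    rcases Nat.lt_or_eq_of_le (Nat.succ_le_of_lt hiq) with hlt | heq
    · simp [carriedValue, hiq, hlt, hmid i hlt, Nat.add_assoc]
    · simp [carriedValue, hiq, heq.not_lt, hlast i heq]

theorem tweaked_path_lemma_general (τ : R → R) (p : List Bool) (hp : p ≠ []) (m n a : ℕ)
    (star : V → V → V)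
    (hn0 : p.length = 1 → ∀ x y, star x y n = τ (sel (p.getD 0 false) x y m))
    (hn1 : 2 ≤ p.length → ∀ x y, star x y n = τ (sel (p.getD 0 false) x y a))
    (hmid : ∀ i, i + 2 ≤ p.length - 1 → ∀ x y,
      star x y (a + i) = sel (p.getD (i + 1) false) x y (a + i + 1))
    (hlast : 2 ≤ p.length → ∀ x y,
      star x y (a + (p.length - 2)) = sel (p.getD (p.length - 1) false) x y m)
    {α : Type*} (s sp : FreeMagma α) (hsp : subtermAt s p = some sp) (f : α → V) :
    evalWith star f s n = τ (evalWith star f sp m) := by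
  obtain ⟨b, q, rfl⟩ := List.exists_cons_of_ne_nil hp
  have hmid' : ∀ i (hi : i + 1 < q.length), ∀ x y,
      star x y (a + i) = sel q[i] x y (a + i + 1) := fun i hi x y => by
    simpa [Nat.lt_of_succ_lt hi] using hmid i hi x y
  have hlast' : ∀ i (hi : i + 1 = q.length), ∀ x y,
      star x y (a + i) = sel q[i] x y m := fun i hi x y => by
    simpa [← hi] using hlast (by simp [← hi]) x y
  have hcarried := carriedValue_star τ m n a (fun hq => hn0 (congrArg (· + 1) hq))
    (fun hq => hn1 (Nat.succ_le_succ hq)) hmid' hlast'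
  simpa [carriedValue] using evalWith_apply_of_subtermAt f hcarried hsp

end TweakedOperation

/-- Let `p = p₀p₁⋯p_j` be a nonempty string over `{l, r}`
(`false = l`, `true = r`), let `m n` be naturals, and let the fresh indices
`a, a+1, …, a+j-1` be distinct from `m` and `n`.  Let `⋆` be any operation on finitely
supported vectors over `Z₂` agreeing with the tweaked operation `‖m,p,n‖′` on components
`n, a, …, a+j-1` (e.g. `‖m,p,n‖′` itself, or `‖m,p,n‖′ + ⋆′` with `⋆′` vanishing on
those components): writing `z = x ⋆ y`, if `j = 0` then `z[n] = (x or y)[m] + 1`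
according as `p₀ = l` or `r`; if `j ≥ 1` then `z[n] = (x or y)[a] + 1` according to
`p₀`, `z[a+i] = (x or y)[a+i+1]` according to `p_{i+1}` for `0 ≤ i ≤ j-2`, and
`z[a+j-1] = (x or y)[m]` according to `p_j` (all values mod 2).  If `s` is any groupoid
term such that `p` is the path to a node of `T(s)`, with subterm `t = s_p` rooted there,
then `s[n] = (t[m] + 1) mod 2` for all values of the variables. -/
theorem tweaked_path_lemma (p : List Bool) (hp : p ≠ []) (m n a : ℕ)
    (hdist : ∀ i < p.length - 1, a + i ≠ m ∧ a + i ≠ n)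
    (star : (ℕ →₀ ZMod 2) → (ℕ →₀ ZMod 2) → (ℕ →₀ ZMod 2))
    (hn0 : p.length = 1 → ∀ x y, star x y n = sel (p.getD 0 false) x y m + 1)
    (hn1 : 2 ≤ p.length → ∀ x y, star x y n = sel (p.getD 0 false) x y a + 1)
    (hmid : ∀ i, i + 2 ≤ p.length - 1 → ∀ x y,
      star x y (a + i) = sel (p.getD (i + 1) false) x y (a + i + 1))
    (hlast : 2 ≤ p.length → ∀ x y,
      star x y (a + (p.length - 2)) = sel (p.getD (p.length - 1) false) x y m)
    {α : Type*} (s sp : FreeMagma α) (hsp : subtermAt s p = some sp)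
    (f : α → (ℕ →₀ ZMod 2)) :
    evalWith star f s n = evalWith star f sp m + 1 :=
  tweaked_path_lemma_general (· + 1) p hp m n a star hn0 hn1 hmid hlast s sp hsp f
end

section
/- Let s and t be any groupoid terms (variables may repeat and need not be in order). Suppose the variable x has an occurrence in s whose path is p and an occurrence in t whose path is q, where q is a proper initial substring of p. Then there is a finite groupoid that separates s and t. -/
/-- The list of variable occurrences of a term, together with their paths: strings
over `{l, r}` (here `false = l`, `true = r`) read from the root of `T(s)`. -/
def leafPaths {α : Type*} : FreeMagma α → List (α × List Bool)
  | .of a => [(a, [])]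
  | .mul s t => (leafPaths s).map (fun q => (q.1, false :: q.2)) ++
      (leafPaths t).map (fun q => (q.1, true :: q.2))

/-!
Follow the path `p` with coordinates: in a groupoid of sequences indexed by `0, …, |p|`, let
coordinate `k` of a product be coordinate `k + 1` of the factor chosen by the `k`-th letter of `p`.
If `x` occurs in a term at a path that is an initial substring `r` of `p`, then coordinate `0` of
the value of the term is coordinate `|r|` of the value of `x`. Under an assignment giving `s` and
`t` the same value, coordinates `|p|` and `|q|` of the value of `x` would therefore agree. Only the
coordinates `0, …, |p| - 1` are free, so coordinate `|p|` can be decreed to be the negation of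
coordinate `|q|`.
-/

theorem cons_prefix_drop_iff {β : Type*} {w r : List β} {c : β} {k : ℕ} :
    c :: r <+: w.drop k ↔ (∃ hk : k < w.length, w[k] = c) ∧ r <+: w.drop (k + 1) := by
  rcases lt_or_ge k w.length with hk | hk
  · rw [List.drop_eq_getElem_cons hk, List.cons_prefix_cons, exists_prop_of_true hk, eq_comm]
  · simp [List.drop_eq_nil_of_le hk, hk.not_gt]

section LeafPaths

variable {α : Type*} {x : α} {r : List Bool}

theorem mem_leafPaths_of {a : α} : (x, r) ∈ leafPaths (.of a) ↔ x = a ∧ r = [] := by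
  simp [leafPaths]

theorem mem_leafPaths_mul {s t : FreeMagma α} :
    (x, r) ∈ leafPaths (s.mul t) ↔
      ∃ c r', r = c :: r' ∧ (x, r') ∈ leafPaths (if c then t else s) := by
  simp [leafPaths, eq_comm, and_comm]

end LeafPaths

section PathOp

variable {A : Type*}

/-- The `k`-th coordinate of the sequence `a 0, …, a (n - 1), last a`, whose final entry is a
function of the others. Indices beyond `n` get the junk value `last a`. -/
def coord {n : ℕ} (last : (Fin n → A) → A) (a : Fin n → A) (k : ℕ) : A :=
  if h : k < n then a ⟨k, h⟩ else last a

/-- The groupoid operation that follows the path `w`: coordinate `k` of a product is coordinate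
`k + 1`, in the sense of `coord`, of the factor chosen by the `k`-th letter of `w`. -/
def pathOp (w : List Bool) (last : (Fin w.length → A) → A) (a b : Fin w.length → A) :
    Fin w.length → A :=
  fun k => coord last (if w[k] then b else a) (k + 1)

theorem coord_of_lt {n k : ℕ} (last : (Fin n → A) → A) (a : Fin n → A) (hk : k < n) :
    coord last a k = a ⟨k, hk⟩ :=
  dif_pos hk

theorem coord_length {n : ℕ} (last : (Fin n → A) → A) (a : Fin n → A) :
    coord last a n = last a :=
  dif_neg (lt_irrefl n)

theorem coord_pathOp {w : List Bool} (last : (Fin w.length → A) → A) {a b : Fin w.length → A}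
    {k : ℕ} (hk : k < w.length) :
    coord last (pathOp w last a b) k = coord last (if w[k] then b else a) (k + 1) :=
  coord_of_lt last _ hk

theorem coord_evalWith_pathOp {α : Type*} {w : List Bool} (last : (Fin w.length → A) → A)
    (f : α → Fin w.length → A) {s : FreeMagma α} {x : α} {r : List Bool} {k : ℕ}
    (hxr : (x, r) ∈ leafPaths s) (hrw : r <+: w.drop k) :
    coord last (evalWith (pathOp w last) f s) k = coord last (f x) (k + r.length) := by
  induction s generalizing r k with
  | ih1 a =>
    obtain ⟨rfl, rfl⟩ := mem_leafPaths_of.mp hxr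
    rfl
  | ih2 s t ihs iht =>
    obtain ⟨c, r, rfl, hx⟩ := mem_leafPaths_mul.mp hxr
    obtain ⟨⟨hk, rfl⟩, hr⟩ := cons_prefix_drop_iff.mp hrw
    calc coord last (evalWith (pathOp w last) f (s.mul t)) k
        = coord last (evalWith (pathOp w last) f (if w[k] then t else s)) (k + 1) := by
          rw [evalWith, coord_pathOp last hk, apply_ite (evalWith (pathOp w last) f)]
      _ = coord last (f x) (k + 1 + r.length) := by
          split_ifs at hx ⊢
          · exact iht hx hr
          · exact ihs hx hr
      _ = coord last (f x) (k + (w[k] :: r).length) := by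
          rw [List.length_cons, Nat.add_right_comm, Nat.add_assoc]

end PathOp

/-- Let `s` and `t` be any groupoid terms (variables may repeat and need
not be in order).  If the variable `x` has an occurrence in `s` with path `p` and an
occurrence in `t` with path `q`, where `q` is a proper initial substring of `p`, then
there is a finite groupoid separating `s` and `t`. -/
theorem cover_theorem {α : Type*} (s t : FreeMagma α) (x : α) (p q : List Bool)
    (hps : (x, p) ∈ leafPaths s) (hqt : (x, q) ∈ leafPaths t)
    (hpre : q <+: p) (hne : q ≠ p) :
    ∃ (G : Type) (op : G → G → G), Finite G ∧ Separates op s t := by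
  have hlt : q.length < p.length :=
    hpre.length_le.lt_of_ne fun h => hne (hpre.eq_of_length h)
  let last (a : Fin p.length → Bool) : Bool := !a ⟨q.length, hlt⟩
  refine ⟨Fin p.length → Bool, pathOp p last, inferInstance, fun f hst => ?_⟩
  have hs : coord last (evalWith (pathOp p last) f s) 0 = !f x ⟨q.length, hlt⟩ := by
    rw [coord_evalWith_pathOp (k := 0) last f hps List.prefix_rfl, Nat.zero_add, coord_length]
  have ht : coord last (evalWith (pathOp p last) f t) 0 = f x ⟨q.length, hlt⟩ := by
    rw [coord_evalWith_pathOp (k := 0) last f hqt hpre, Nat.zero_add, coord_of_lt]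
  exact Bool.not_ne_self _ (hs.symm.trans ((congrArg (coord last · 0) hst).trans ht))
end

section
/- Let k ≥ 3 and let s and t be two distinct ordered terms on x₁,…,x_k. Let x_m be the leftmost variable on which s and t disagree, i.e., path_s(x_i) = path_t(x_i) for all i < m and path_s(x_m) ≠ path_t(x_m) (such m exists since s ≠ t). Then one of path_s(x_m) and path_t(x_m) is a proper initial substring of the other. -/
/-! The path of the first leaf of a binary tree is `l^j`. If `w l r^i` is the path of a leaf other
than the last (every such path has this form, for a unique `w`), then the path of the next leaf is
`w r l^j` for some `j`. So the path of a leaf determines the path of the next one up to the number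
of trailing `l`s, and two strings that differ only in that number are comparable. Apply this in
`s` and `t` to the leaf just before `x_m`, which has the same path in both. -/

section Lists

variable {β : Type*}

theorem replicate_prefix_replicate_or (a : β) (i j : ℕ) :
    List.replicate i a <+: List.replicate j a ∨ List.replicate j a <+: List.replicate i a := by
  simpa [List.prefix_replicate_iff] using le_total i j

theorem eq_of_append_cons_eq_append_cons {a : β} {w w' r r' : List β} (hr : a ∉ r) (hr' : a ∉ r')
    (h : w ++ a :: r = w' ++ a :: r') : w = w' := by
  induction w generalizing w' with
  | nil => cases w' <;> simp_all
  | cons b w ih => cases w' <;> grind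

end Lists

/-- `IsNextPath u v` holds when `v` is the path of the leaf immediately to the right of the leaf
with path `u` in some binary tree: from their last common node `w`, the path `u` goes left once
and then only right, while `v` goes right once and then only left. -/
def IsNextPath (u v : List Bool) : Prop :=
  ∃ (w : List Bool) (i j : ℕ),
    u = w ++ false :: List.replicate i true ∧ v = w ++ true :: List.replicate j false

namespace IsNextPath

variable {u v v' : List Bool}

theorem cons (b : Bool) (h : IsNextPath u v) : IsNextPath (b :: u) (b :: v) := by
  obtain ⟨w, i, j, rfl, rfl⟩ := h
  exact ⟨b :: w, i, j, rfl, rfl⟩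

theorem prefix_or_prefix (h : IsNextPath u v) (h' : IsNextPath u v') :
    v <+: v' ∨ v' <+: v := by
  obtain ⟨w, i, j, rfl, rfl⟩ := h
  obtain ⟨w', i', j', hw, rfl⟩ := h'
  obtain rfl : w = w' := eq_of_append_cons_eq_append_cons (by simp) (by simp) hw
  simpa [List.prefix_append_right_inj] using replicate_prefix_replicate_or false j j'

end IsNextPath

section LeafPaths

variable {α : Type*}

theorem leafPaths_mul (s t : FreeMagma α) :
    leafPaths (s * t) = (leafPaths s).map (fun x => (x.1, false :: x.2)) ++
      (leafPaths t).map (fun x => (x.1, true :: x.2)) :=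
  rfl

theorem map_fst_leafPaths (s : FreeMagma α) : (leafPaths s).map Prod.fst = varList s := by
  induction s with
  | ih1 a => rfl
  | ih2 s t hs ht =>
    calc (leafPaths (s * t)).map Prod.fst
        = (leafPaths s).map Prod.fst ++ (leafPaths t).map Prod.fst := by
          simp [leafPaths_mul, Function.comp_def]
      _ = varList (s * t) := by rw [hs, ht]; rfl

theorem exists_leafPaths_eq_cons (s : FreeMagma α) :
    ∃ a j l, leafPaths s = (a, List.replicate j false) :: l := by
  induction s with
  | ih1 a => exact ⟨a, 0, [], rfl⟩
  | ih2 s t hs _ =>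
    obtain ⟨a, j, l, hl⟩ := hs
    exact ⟨a, j + 1, _, by rw [leafPaths_mul, hl]; rfl⟩

theorem exists_leafPaths_eq_concat (s : FreeMagma α) :
    ∃ l a i, leafPaths s = l ++ [(a, List.replicate i true)] := by
  induction s with
  | ih1 a => exact ⟨[], a, 0, rfl⟩
  | ih2 s t _ ht =>
    obtain ⟨l, a, i, hl⟩ := ht
    exact ⟨_, a, i + 1, by rw [leafPaths_mul, hl, List.map_append, ← List.append_assoc]; rfl⟩

theorem isChain_leafPaths (s : FreeMagma α) :
    (leafPaths s).IsChain (fun x y => IsNextPath x.2 y.2) := by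
  induction s with
  | ih1 a => exact .singleton _
  | ih2 s t hs ht =>
    rw [leafPaths_mul]
    refine List.IsChain.append (List.isChain_map_of_isChain _ (fun _ _ => .cons false) hs)
      (List.isChain_map_of_isChain _ (fun _ _ => .cons true) ht) ?_
    obtain ⟨l, a, i, hl⟩ := exists_leafPaths_eq_concat s
    obtain ⟨b, j, l', hl'⟩ := exists_leafPaths_eq_cons t
    have hturn : IsNextPath (false :: List.replicate i true) (true :: List.replicate j false) :=
      ⟨[], i, j, rfl, rfl⟩
    simpa [hl, hl'] using hturn

theorem eq_of_mem_leafPaths {s : FreeMagma α} (hs : (varList s).Nodup) {a : α} {u v : List Bool}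
    (hu : (a, u) ∈ leafPaths s) (hv : (a, v) ∈ leafPaths s) : u = v := by
  rw [← map_fst_leafPaths] at hs
  exact congrArg Prod.snd (List.inj_on_of_nodup_map hs hu hv rfl)

theorem exists_replicate_false_mem_leafPaths {s : FreeMagma α} {a : α} {l : List α}
    (h : varList s = a :: l) : ∃ j, (a, List.replicate j false) ∈ leafPaths s := by
  obtain ⟨b, j, l', hl'⟩ := exists_leafPaths_eq_cons s
  rw [← map_fst_leafPaths, hl', List.map_cons, List.cons.injEq] at h
  obtain ⟨rfl, -⟩ := h
  exact ⟨j, by simp [hl']⟩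

theorem exists_isNextPath_of_infix {s : FreeMagma α} {a b : α} (h : [a, b] <:+: varList s) :
    ∃ u v, (a, u) ∈ leafPaths s ∧ (b, v) ∈ leafPaths s ∧ IsNextPath u v := by
  rw [← map_fst_leafPaths, List.infix_map_iff] at h
  obtain ⟨l, hl, hab⟩ := h
  obtain ⟨x, l, rfl, rfl, hb⟩ := List.map_eq_cons_iff.1 hab.symm
  obtain ⟨y, rfl, rfl⟩ := List.map_eq_singleton_iff.1 hb
  have hxy : IsNextPath x.2 y.2 := by simpa using (isChain_leafPaths s).infix hl
  exact ⟨x.2, y.2, hl.subset (by simp), hl.subset (by simp), hxy⟩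

theorem leftmost_disagreement_prefix_general {s t : FreeMagma α} (hst : varList s = varList t)
    (hs : (varList s).Nodup) {m : α} {p q : List Bool}
    (hps : (m, p) ∈ leafPaths s) (hqt : (m, q) ∈ leafPaths t)
    (hagree : ∀ a, [a, m] <:+: varList s → ∀ u, (a, u) ∈ leafPaths s → (a, u) ∈ leafPaths t) :
    p <+: q ∨ q <+: p := by
  have ht : (varList t).Nodup := hst ▸ hs
  have hm : m ∈ varList s := map_fst_leafPaths s ▸ List.mem_map_of_mem hps
  obtain ⟨l, l', hl⟩ := List.append_of_mem hm
  obtain rfl | ⟨l, a, rfl⟩ := l.eq_nil_or_concat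
  · obtain ⟨i, hi⟩ := exists_replicate_false_mem_leafPaths hl
    obtain ⟨j, hj⟩ := exists_replicate_false_mem_leafPaths (hst ▸ hl)
    rw [eq_of_mem_leafPaths hs hps hi, eq_of_mem_leafPaths ht hqt hj]
    exact replicate_prefix_replicate_or false i j
  · have ham : [a, m] <:+: varList s := ⟨l, l', by simp [hl]⟩
    obtain ⟨u, v, hu, hv, huv⟩ := exists_isNextPath_of_infix ham
    obtain ⟨u', v', hu', hv', huv'⟩ := exists_isNextPath_of_infix (hst ▸ ham)
    obtain rfl : u = u' := eq_of_mem_leafPaths ht (hagree a ham u hu) hu'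
    rw [eq_of_mem_leafPaths hs hps hv, eq_of_mem_leafPaths ht hqt hv']
    exact huv.prefix_or_prefix huv'

end LeafPaths

/-- Let `k ≥ 3` and let `s`, `t` be distinct ordered terms on
`x₁, …, x_k`.  Let `x_m` be the leftmost variable on which `s` and `t` disagree:
`path_s(x_i) = path_t(x_i)` for all `i < m`, while `path_s(x_m) = p ≠ q = path_t(x_m)`.
Then one of `p` and `q` is a proper initial substring of the other. -/
theorem leftmost_disagreement_prefix (k : ℕ) (hk : 3 ≤ k)
    (s t : FreeMagma (Fin k)) (hs : IsOrderedTerm s) (ht : IsOrderedTerm t) (hst : s ≠ t)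
    (m : Fin k) (p q : List Bool)
    (hps : (m, p) ∈ leafPaths s) (hqt : (m, q) ∈ leafPaths t)
    (hagree : ∀ i : Fin k, i < m → ∀ u : List Bool,
      ((i, u) ∈ leafPaths s ↔ (i, u) ∈ leafPaths t))
    (hne : p ≠ q) :
    (p <+: q ∧ p ≠ q) ∨ (q <+: p ∧ q ≠ p) := by
  have hpred (i : Fin k) (him : [i, m] <:+: varList s) : i < m := by
    rw [hs] at him
    simpa using (List.pairwise_lt_finRange k).sublist him.sublist
  have hpq : p <+: q ∨ q <+: p :=
    leftmost_disagreement_prefix_general (hs.trans ht.symm) (hs ▸ List.nodup_finRange k)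
      hps hqt fun i him u => (hagree i (hpred i him) u).1
  exact hpq.imp (⟨·, hne⟩) (⟨·, hne.symm⟩)
end

section
/- For every k ≥ 3 there is a finite groupoid that is k-antiassociative, i.e., a finite groupoid that separates every pair of distinct ordered terms on x₁,…,x_k. -/
/-!
Under the operation `graft` on labelled binary trees, the value of a term has, at each address of a
subterm, the root label of the tree assigned to the leftmost variable of that subterm, plus the left
depth of the subterm. If two distinct terms list the same variables, consider the leftmost address
at which one of them has a variable and the other a product. Both subterms there begin with the same
variable, because the terms agree to the left of it, so the two labels differ by the left depth of
the product, which is positive. It is at most the bound `n` on the depth of the terms, so labels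
modulo `n + 1` and trees with `n` levels suffice to see the difference.
-/

/-- The depth of a term as a binary tree; a variable has depth `0`. -/
def depth {α : Type*} : FreeMagma α → ℕ
  | .of _ => 0
  | .mul s t => max (depth s) (depth t) + 1

/-- Complete binary trees with `n` levels and nodes labelled by `ZMod (n + 1)`, the carrier of the
separating groupoid. A node is addressed by the path leading to it from the root, in which `false`
stands for a step to the left and `true` for a step to the right. -/
abbrev LabelledTree (n : ℕ) : Type :=
  {w : List Bool // w.length < n} → ZMod (n + 1)

/-- The operation of the separating groupoid: `graft x y` has `x` and `y` as its left and right
subtrees, cut off at `n` levels, and its root label is that of `x` plus one. -/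
def graft {n : ℕ} (x y : LabelledTree n) : LabelledTree n
  | ⟨[], h⟩ => x ⟨[], h⟩ + 1
  | ⟨false :: w, h⟩ => x ⟨w, Nat.lt_of_succ_lt h⟩
  | ⟨true :: w, h⟩ => y ⟨w, Nat.lt_of_succ_lt h⟩

instance LabelledTree.instFinite (n : ℕ) : Finite (LabelledTree n) :=
  have : Finite {w : List Bool // w.length < n} := List.finite_length_lt Bool n
  inferInstance

section

variable {α : Type*}

theorem depth_lt_length_varList : ∀ t : FreeMagma α, depth t < (varList t).length
  | .of _ => Nat.zero_lt_one
  | .mul s t => by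
    have hs := depth_lt_length_varList s
    have ht := depth_lt_length_varList t
    simp only [depth, varList, List.length_append]
    omega

theorem leftDepth_le_depth : ∀ t : FreeMagma α, leftDepth t ≤ depth t
  | .of _ => le_rfl
  | .mul s _ => Nat.succ_le_succ ((leftDepth_le_depth s).trans (le_max_left _ _))

theorem IsOrderedTerm.depth_lt {k : ℕ} {t : FreeMagma (Fin k)} (ht : IsOrderedTerm t) :
    depth t < k :=
  calc
    depth t < (varList t).length := depth_lt_length_varList t
    _ = k := by rw [ht, List.length_finRange]

theorem IsOrderedTerm.varList_prefix {k : ℕ} {t : FreeMagma (Fin k)} (ht : IsOrderedTerm t) :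
    varList t <+: List.finRange k :=
  ⟨[], by rw [ht, List.append_nil]⟩

variable {n : ℕ} (f : α → LabelledTree n)

theorem evalWith_graft_root (hn : 0 < n) {a : α} {l : List α} :
    ∀ t : FreeMagma α, varList t <+: a :: l →
      evalWith graft f t ⟨[], hn⟩ = f a ⟨[], hn⟩ + leftDepth t
  | .of b, hb => by
    obtain ⟨rfl, -⟩ := List.cons_prefix_cons.mp hb
    simp [evalWith, leftDepth]
  | .mul s t, hst => by
    have hs : varList s <+: a :: l := (List.prefix_append _ _).trans hst
    calc
      evalWith graft f (.mul s t) ⟨[], hn⟩ = evalWith graft f s ⟨[], hn⟩ + 1 := rfl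
      _ = f a ⟨[], hn⟩ + leftDepth s + 1 := by rw [evalWith_graft_root hn s hs]
      _ = f a ⟨[], hn⟩ + leftDepth (.mul s t) := by simp [leftDepth, add_assoc]

variable {f}

theorem evalWith_graft_mul_root_ne (hn : 0 < n) {a : α} {l : List α} {s t : FreeMagma α}
    (hst : varList (.mul s t) <+: a :: l) (hdepth : depth (.mul s t) ≤ n) :
    evalWith graft f (.mul s t) ⟨[], hn⟩ ≠ f a ⟨[], hn⟩ := by
  rw [evalWith_graft_root f hn _ hst, ne_eq, add_eq_left, ZMod.natCast_eq_zero_iff]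
  exact Nat.not_dvd_of_pos_of_lt (Nat.succ_pos _)
    (Nat.lt_succ_of_le ((leftDepth_le_depth _).trans hdepth))

theorem eqOn_subtrees_of_eqOn_graft {d : ℕ} (hd : d < n) {x x' y y' : LabelledTree n}
    (h : Set.EqOn (graft x y) (graft x' y') {w | w.1.length < d + 1}) :
    Set.EqOn x x' {w | w.1.length < d} ∧ Set.EqOn y y' {w | w.1.length < d} := by
  constructor <;> intro w hw
  · exact h (x := ⟨false :: w.1, (Nat.succ_lt_succ hw).trans_le hd⟩) (Nat.succ_lt_succ hw)
  · exact h (x := ⟨true :: w.1, (Nat.succ_lt_succ hw).trans_le hd⟩) (Nat.succ_lt_succ hw)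

theorem eq_of_eqOn_evalWith_graft : ∀ {s t : FreeMagma α} {l : List α} {d : ℕ}, d ≤ n →
    varList s <+: l → varList t <+: l → depth s ≤ d → depth t ≤ d →
    Set.EqOn (evalWith graft f s) (evalWith graft f t) {w | w.1.length < d} → s = t
  | .of a, .of b, _, _, _, ⟨_, ha⟩, hb, _, _, _ => by
    subst ha
    rw [(List.cons_prefix_cons.mp hb).1]
  | .of a, .mul t₁ t₂, _, d, hdn, ⟨_, ha⟩, ht, _, htd, h => by
    subst ha
    have hd : 0 < d := Nat.zero_lt_of_lt htd
    exact absurd (h hd).symm (evalWith_graft_mul_root_ne (hd.trans_le hdn) ht (htd.trans hdn))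
  | .mul s₁ s₂, .of b, _, d, hdn, hs, ⟨_, hb⟩, hsd, _, h => by
    subst hb
    have hd : 0 < d := Nat.zero_lt_of_lt hsd
    exact absurd (h hd) (evalWith_graft_mul_root_ne (hd.trans_le hdn) hs (hsd.trans hdn))
  | .mul s₁ s₂, .mul t₁ t₂, _, d + 1, hdn, hs, ht, hsd, htd, h => by
    obtain ⟨hs₁d, hs₂d⟩ := max_le_iff.mp (Nat.le_of_succ_le_succ hsd)
    obtain ⟨ht₁d, ht₂d⟩ := max_le_iff.mp (Nat.le_of_succ_le_succ htd)
    obtain ⟨hleft, hright⟩ := eqOn_subtrees_of_eqOn_graft hdn h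
    have hdn' : d ≤ n := Nat.le_of_lt hdn
    obtain rfl : s₁ = t₁ :=
      eq_of_eqOn_evalWith_graft hdn' ((List.prefix_append _ _).trans hs)
        ((List.prefix_append _ _).trans ht) hs₁d ht₁d hleft
    obtain ⟨l', rfl⟩ := (List.prefix_append _ _).trans hs
    obtain rfl : s₂ = t₂ :=
      eq_of_eqOn_evalWith_graft hdn' ((List.prefix_append_right_inj _).mp hs)
        ((List.prefix_append_right_inj _).mp ht) hs₂d ht₂d hright
    rfl

theorem separates_graft {l : List α} {s t : FreeMagma α} (hs : varList s <+: l)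
    (ht : varList t <+: l) (hsn : depth s ≤ n) (htn : depth t ≤ n) (hst : s ≠ t) :
    Separates (graft (n := n)) s t := fun _ heq =>
  hst (eq_of_eqOn_evalWith_graft le_rfl hs ht hsn htn fun w _ => congrFun heq w)

end

theorem exists_finite_kAntiassociative_general (n : ℕ) :
    ∃ (G : Type) (op : G → G → G), Finite G ∧
      ∀ {α : Type*} {s t : FreeMagma α} {l : List α}, varList s <+: l → varList t <+: l →
        depth s ≤ n → depth t ≤ n → s ≠ t → Separates op s t :=
  ⟨LabelledTree n, graft, inferInstance, separates_graft⟩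

/-- For every `k ≥ 3` there is a finite groupoid that is
`k`-antiassociative. -/
theorem exists_finite_kAntiassociative (k : ℕ) (hk : 3 ≤ k) :
    ∃ (G : Type) (op : G → G → G), Finite G ∧ KAntiassociative k op := by
  obtain ⟨G, op, hG, hsep⟩ := exists_finite_kAntiassociative_general k
  exact ⟨G, op, hG, fun s t hs ht =>
    hsep hs.varList_prefix ht.varList_prefix hs.depth_lt.le ht.depth_lt.le⟩
end

section
/- The free groupoid on one generator is k-antiassociative for every k ≥ 3: for every k ≥ 3, any two distinct ordered terms s and t on x₁,…,x_k are separated in the free magma F_G(x) on one generator, i.e., s(f₁,…,f_k) ≠ t(f₁,…,f_k) for all elements f₁,…,f_k of F_G(x). -/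
/-!
An injective operation splits an equation `s₁ s₂ = t₁ t₂` between values of terms into `s₁ = t₁` and
`s₂ = t₂`, but to recurse one must know that `s₁` and `t₁` have the same variables. Suppose that
every element has a size, additive under the operation and positive on the values of the variables.
Then the size of the value of a term is the sum of the sizes of the values of its variables, and two
prefixes of the same list of variables with the same total size coincide. In a free magma, length
is such a size.
-/

theorem eq_of_isPrefix_of_sum_map_eq {α A : Type*} [AddMonoid A] [Preorder A] [AddLeftStrictMono A]
    {w : α → A} (hw : ∀ a, 0 < w a) {l₁ l₂ l : List α} (h₁ : l₁ <+: l) (h₂ : l₂ <+: l)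
    (hsum : (l₁.map w).sum = (l₂.map w).sum) : l₁ = l₂ := by
  wlog h : l₁ <+: l₂ generalizing l₁ l₂
  · exact (this h₂ h₁ hsum.symm ((List.prefix_or_prefix_of_prefix h₁ h₂).resolve_left h)).symm
  obtain ⟨r, rfl⟩ := h
  rw [List.map_append, List.sum_append] at hsum
  suffices hr : r = [] by rw [hr, List.append_nil]
  by_contra hr
  have hpos : 0 < (r.map w).sum :=
    List.sum_induction_nonempty (0 < ·) (fun _ _ => Left.add_pos)
      (mt List.map_eq_nil_iff.1 hr) (List.forall_mem_map.2 fun a _ => hw a)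
  exact (lt_add_of_pos_right _ hpos).ne hsum

theorem varList_ne_nil {α : Type*} (t : FreeMagma α) : varList t ≠ [] := by
  induction t using FreeMagma.rec with
  | of a => exact List.cons_ne_nil a []
  | mul s t hs _ => exact List.append_ne_nil_of_left_ne_nil hs _

theorem varList_mul_ne_singleton {α : Type*} (s t : FreeMagma α) (a : α) :
    varList (.mul s t) ≠ [a] := by
  simp [varList, List.append_eq_singleton_iff, varList_ne_nil]

section Size

variable {α G A : Type*} {op : G → G → G} {size : G → A}

theorem size_evalWith [AddMonoid A] (hsize : ∀ x y, size (op x y) = size x + size y)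
    (f : α → G) (t : FreeMagma α) :
    size (evalWith op f t) = ((varList t).map (size ∘ f)).sum := by
  induction t using FreeMagma.rec with
  | of a => simp [varList, evalWith]
  | mul s t hs ht => rw [evalWith, varList, hsize, hs, ht, List.map_append, List.sum_append]

theorem eq_of_evalWith_eq [AddMonoid A] [Preorder A] [AddLeftStrictMono A]
    (hop : Function.Injective2 op) (hsize : ∀ x y, size (op x y) = size x + size y)
    {f : α → G} (hpos : ∀ a, 0 < size (f a)) {s t : FreeMagma α}
    (hvar : varList s = varList t) (heval : evalWith op f s = evalWith op f t) : s = t := by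
  induction s using FreeMagma.rec generalizing t with
  | of a =>
    cases t with
    | of b => rw [List.singleton_injective hvar]
    | mul t₁ t₂ => exact absurd hvar.symm (varList_mul_ne_singleton t₁ t₂ a)
  | mul s₁ s₂ ih₁ ih₂ =>
    cases t with
    | of b => exact absurd hvar (varList_mul_ne_singleton s₁ s₂ b)
    | mul t₁ t₂ =>
      obtain ⟨heval₁, heval₂⟩ := hop heval
      rw [varList, varList] at hvar
      have hvar₁ : varList s₁ = varList t₁ := by
        refine eq_of_isPrefix_of_sum_map_eq (w := size ∘ f) hpos (List.prefix_append _ (varList s₂))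
          (hvar ▸ List.prefix_append _ (varList t₂)) ?_
        rw [← size_evalWith hsize, ← size_evalWith hsize, heval₁]
      have hvar₂ : varList s₂ = varList t₂ := List.append_cancel_left (hvar₁ ▸ hvar)
      rw [ih₁ hvar₁ heval₁, ih₂ hvar₂ heval₂]

end Size

theorem freeMagma_mul_injective2 (β : Type*) :
    Function.Injective2 fun x y : FreeMagma β => x * y := by
  rintro _ _ _ _ ⟨⟩
  exact ⟨rfl, rfl⟩

theorem freeMagma_kAntiassociative_general {α β : Type*} {s t : FreeMagma α}
    (hvar : varList s = varList t) (hst : s ≠ t) (f : α → FreeMagma β) :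
    evalWith (fun a b => a * b) f s ≠ evalWith (fun a b => a * b) f t :=
  mt (eq_of_evalWith_eq (size := FreeMagma.length) (freeMagma_mul_injective2 β)
    (fun _ _ => rfl) (fun a => (f a).length_pos) hvar) hst

/-- The free groupoid (free magma) on one generator is
`k`-antiassociative for every `k ≥ 3`: any two distinct ordered terms `s` and `t` on
`x₁, …, x_k` satisfy `s(f₁,…,f_k) ≠ t(f₁,…,f_k)` for all elements `f₁, …, f_k` of the
free magma on one generator. -/
theorem freeMagma_kAntiassociative (k : ℕ) (hk : 3 ≤ k)
    (s t : FreeMagma (Fin k)) (hs : IsOrderedTerm s) (ht : IsOrderedTerm t) (hst : s ≠ t) :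
    ∀ f : Fin k → FreeMagma Unit,
      evalWith (fun a b => a * b) f s ≠ evalWith (fun a b => a * b) f t :=
  freeMagma_kAntiassociative_general (hs.trans ht.symm) hst
end
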